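/- The family of polynomials t^l_{n m̲}(Z)·(det Z)^k, indexed by l ∈ {0, 1/2, 1, 3/2, …}, m,n ∈ {−l, −l+1, …, l}, and k ∈ {0,1,2,…}, is a ℂ-vector-space basis of the polynomial ring ℂ[z₁₁, z₁₂, z₂₁, z₂₂] (the polynomial functions on 2×2 complex matrices): these polynomials are linearly independent and span the whole ring. -/

import Mathlib

noncomputable section

open MvPolynomial

/-- The polynomial ring `ℂ[z₁₁, z₁₂, z₂₁, z₂₂]`, with variable `(i,j)` standing for
`z_{i+1,j+1}`. -/
abbrev PolyRing := MvPolynomial (Fin 2 × Fin 2) ℂ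

/-- The matrix coefficient `t^l_{n m̲}(Z)` as a polynomial in the entries of `Z`: here
`p = 2l`, `a = l−m`, `b = l−n`, and `tpoly p a b` is the coefficient of `s^b` in
`(s z₁₁+z₂₁)^a (s z₁₂+z₂₂)^{p−a}`; it is homogeneous of degree `2l = p`. -/
def tpoly (p a b : ℕ) : PolyRing :=
  Polynomial.coeff
    (((Polynomial.C (X (0, 0)) * Polynomial.X + Polynomial.C (X (1, 0))) ^ a *
      (Polynomial.C (X (0, 1)) * Polynomial.X + Polynomial.C (X (1, 1))) ^ (p - a) :
        Polynomial PolyRing)) b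

/-- `det Z = z₁₁z₂₂ − z₁₂z₂₁` as a polynomial. -/
def detPoly : PolyRing := X (0, 0) * X (1, 1) - X (0, 1) * X (1, 0)

/-- The family `t^l_{n m̲}(Z)·(det Z)^k`, indexed by `l` (encoded `p = 2l`), `m, n ∈ {−l,…,l}`
(encoded `a = l−m`, `b = l−n`, as elements of `Fin (p+1)`), and `k ∈ ℕ`. -/
def tfam (q : (Σ p : ℕ, Fin (p + 1) × Fin (p + 1)) × ℕ) : PolyRing :=
  tpoly q.1.1 q.1.2.1 q.1.2.2 * detPoly ^ q.2

/-!
Modulo `d = det Z`, a monomial in the `z_ij` depends only on the row and column sums of its exponent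
matrix, and by Vandermonde's identity `t^l_{n m̲}` is a nonzero multiple of the monomials with the
corresponding sums. Hence every monomial is, modulo `d`, a multiple of some `t^l_{n m̲}` of the
same degree, and dividing by `d` lowers the degree, so the products `t^l_{n m̲} d^k` span.
Conversely, the substitution `z_ij = x_i y_j` kills `d` and turns the `t^l_{n m̲}` into nonzero
multiples of distinct monomials, so they are linearly independent modulo `d`; since `d` is not a
zero divisor, a relation among the `t^l_{n m̲} d^k` can be cancelled one power of `d` at a time.
-/

open scoped Polynomial

theorem eq_zero_of_sum_mul_pow_eq_zero {A : Type*} [CommRing A] {d : A} (hd : IsLeftRegular d)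
    {n : ℕ} {s : ℕ → A} (hs : ∀ k, d ∣ s k → s k = 0)
    (hsum : ∑ k ∈ Finset.range n, s k * d ^ k = 0) : ∀ k < n, s k = 0 := by
  induction n generalizing s with
  | zero => simp
  | succ n ih =>
    have hsplit : d * (∑ k ∈ Finset.range n, s (k + 1) * d ^ k) + s 0 = 0 := by
      rw [← hsum, Finset.sum_range_succ', Finset.mul_sum]
      simp only [pow_succ', pow_zero, mul_one, mul_left_comm]
    have hs_zero : s 0 = 0 := hs 0 ((dvd_add_right (dvd_mul_right d _)).mp (hsplit ▸ dvd_zero d))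
    have htail : ∑ k ∈ Finset.range n, s (k + 1) * d ^ k = 0 := by
      rwa [hs_zero, add_zero, hd.mul_left_eq_zero_iff] at hsplit
    rintro (_ | k) hk
    · exact hs_zero
    · exact ih (fun k => hs (k + 1)) htail k (by lia)

theorem linearIndependent_mul_pow {R A B ι : Type*} [CommRing R] [CommRing A] [Algebra R A]
    [Ring B] [Algebra R B] (φ : A →ₐ[R] B) {d : A} (hd : IsLeftRegular d) (hφd : φ d = 0)
    {t : ι → A} (ht : LinearIndependent R (φ ∘ t)) :
    LinearIndependent R fun q : ι × ℕ => t q.1 * d ^ q.2 := by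
  rw [← linearIndependent_equiv (Equiv.prodComm ℕ ι), linearIndependent_iff]
  intro l hl
  let s (k : ℕ) : A := Finsupp.linearCombination R t (l.curry k)
  have curry_eq_zero (k : ℕ) (h : φ (s k) = 0) : l.curry k = 0 := by
    refine linearIndependent_iff.mp ht _ ?_
    rw [← h]
    exact (Finsupp.apply_linearCombination R φ.toLinearMap t (l.curry k)).symm
  have hs (k : ℕ) (hk : d ∣ s k) : s k = 0 := by
    have hφs : φ (s k) = 0 := by
      obtain ⟨c, hc⟩ := hk
      rw [hc, map_mul, hφd, zero_mul]
    simp [s, curry_eq_zero k hφs]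
  obtain ⟨n, hn⟩ := l.curry.support.exists_nat_subset_range
  have hsum : ∑ k ∈ Finset.range n, s k * d ^ k = 0 := by
    calc ∑ k ∈ Finset.range n, s k * d ^ k
        = l.curry.sum fun k c => Finsupp.linearCombination R t c * d ^ k := by
          rw [Finsupp.sum_of_support_subset _ hn _ (by simp)]
      _ = l.curry.sum fun k c => c.sum fun i r => r • (t i * d ^ k) := by
          simp only [Finsupp.linearCombination_apply, Finsupp.sum_mul, smul_mul_assoc]
      _ = l.sum fun q r => r • (t q.2 * d ^ q.1) :=
          Finsupp.sum_curry_index l fun k i r => r • (t i * d ^ k)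
      _ = 0 := hl
  have hcurry (k : ℕ) : l.curry k = 0 := by
    by_contra hk
    have hkn : k < n := Finset.mem_range.mp (hn (Finsupp.mem_support_iff.mpr hk))
    refine hk (curry_eq_zero k ?_)
    rw [eq_zero_of_sum_mul_pow_eq_zero hd hs hsum k hkn, map_zero]
  ext ⟨k, i⟩
  exact DFunLike.congr_fun (hcurry k) i

theorem mul_mem_span_mul_pow {R A ι : Type*} [CommSemiring R] [CommSemiring A] [Algebra R A]
    (t : ι → A) (d : A) {f : A}
    (hf : f ∈ Submodule.span R (Set.range fun q : ι × ℕ => t q.1 * d ^ q.2)) :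
    d * f ∈ Submodule.span R (Set.range fun q : ι × ℕ => t q.1 * d ^ q.2) := by
  suffices h : Submodule.span R (Set.range fun q : ι × ℕ => t q.1 * d ^ q.2) ≤
      (Submodule.span R (Set.range fun q : ι × ℕ => t q.1 * d ^ q.2)).comap
        (LinearMap.mulLeft R d) from h hf
  rw [Submodule.span_le]
  rintro _ ⟨⟨i, k⟩, rfl⟩
  refine Submodule.subset_span ⟨(i, k + 1), ?_⟩
  simp only [LinearMap.mulLeft_apply, pow_succ']
  ring

theorem submodule_eq_top_of_monomial_congr {R σ : Type*} [CommRing R] [NoZeroDivisors R]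
    {d : MvPolynomial σ R} (hd : 0 < d.totalDegree) {W : Submodule R (MvPolynomial σ R)}
    (hdW : ∀ f ∈ W, d * f ∈ W)
    (hW : ∀ e : σ →₀ ℕ, ∃ s ∈ W, s.totalDegree ≤ e.degree ∧ d ∣ monomial e 1 - s) :
    W = ⊤ := by
  suffices h : ∀ n, ∀ f : MvPolynomial σ R, f.totalDegree ≤ n → f ∈ W from
    eq_top_iff.mpr fun f _ => h _ f le_rfl
  intro n
  induction n using Nat.strong_induction_on with
  | _ n ih =>
  intro f hf
  rw [f.as_sum]
  refine W.sum_mem fun e he => ?_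
  have he_le : e.degree ≤ n := (le_totalDegree he).trans hf
  obtain ⟨s, hsW, hs_deg, g, hg⟩ := hW e
  have hdg_deg : (d * g).totalDegree ≤ e.degree := by
    rw [← hg]
    exact (totalDegree_sub _ _).trans (max_le (totalDegree_monomial_le e 1) hs_deg)
  have hgW : g ∈ W := by
    rcases eq_or_ne g 0 with rfl | hg_ne
    · exact W.zero_mem
    · have hd_ne : d ≠ 0 := by
        rintro rfl
        simp at hd
      rw [totalDegree_mul_of_isDomain hd_ne hg_ne] at hdg_deg
      exact ih g.totalDegree (by lia) g le_rfl
  have hmem : monomial e (1 : R) ∈ W := by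
    rw [sub_eq_iff_eq_add.mp hg]
    exact W.add_mem (hdW g hgW) hsW
  simpa [smul_monomial] using W.smul_mem (coeff e f) hmem

section LinearForms

variable {Q : Type*} [CommSemiring Q]

theorem coeff_C_mul_X_add_C_pow (x z : Q) (n k : ℕ) :
    ((Polynomial.C x * Polynomial.X + Polynomial.C z) ^ n).coeff k =
      n.choose k * (x ^ k * z ^ (n - k)) := by
  have hcomp : (Polynomial.C x * Polynomial.X + Polynomial.C z) ^ n =
      ((Polynomial.X + Polynomial.C z) ^ n).comp (Polynomial.C x * Polynomial.X) := by
    simp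
  rw [hcomp, Polynomial.comp_C_mul_X_coeff, Polynomial.coeff_X_add_C_pow]
  ring

theorem pow_mul_pow_eq_of_margins_eq {x y z w : Q} (h : x * w = y * z) {i j k l i' j' k' l' : ℕ}
    (hrow : i + j = i' + j') (hcol₀ : i + k = i' + k') (hcol₁ : j + l = j' + l') :
    x ^ i * y ^ j * z ^ k * w ^ l = x ^ i' * y ^ j' * z ^ k' * w ^ l' := by
  wlog hi : i ≤ i' generalizing i j k l i' j' k' l'
  · exact (this hrow.symm hcol₀.symm hcol₁.symm (by lia)).symm
  obtain ⟨r, rfl⟩ := Nat.exists_eq_add_of_le hi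
  obtain rfl : j = j' + r := by lia
  obtain rfl : k = k' + r := by lia
  obtain rfl : l' = l + r := by lia
  calc x ^ i * y ^ (j' + r) * z ^ (k' + r) * w ^ l
      = x ^ i * y ^ j' * z ^ k' * w ^ l * (y * z) ^ r := by ring
    _ = x ^ i * y ^ j' * z ^ k' * w ^ l * (x * w) ^ r := by rw [h]
    _ = x ^ (i + r) * y ^ j' * z ^ k' * w ^ (l + r) := by ring

theorem coeff_linear_pow_mul_linear_pow_of_mul_eq_mul {x y z w : Q} (h : x * w = y * z)
    (i j k l : ℕ) :
    ((Polynomial.C x * Polynomial.X + Polynomial.C z) ^ (i + k) *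
      (Polynomial.C y * Polynomial.X + Polynomial.C w) ^ (j + l)).coeff (i + j) =
        (i + k + (j + l)).choose (i + j) * (x ^ i * y ^ j * z ^ k * w ^ l) := by
  rw [Polynomial.coeff_mul, Nat.add_choose_eq, Nat.cast_sum, Finset.sum_mul]
  refine Finset.sum_congr rfl ?_
  rintro ⟨u, v⟩ huv
  rw [Finset.HasAntidiagonal.mem_antidiagonal] at huv
  simp only [coeff_C_mul_X_add_C_pow, Nat.cast_mul]
  rcases lt_or_ge (i + k) u with hu | hu
  · simp [Nat.choose_eq_zero_of_lt hu]
  rcases lt_or_ge (j + l) v with hv | hv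
  · simp [Nat.choose_eq_zero_of_lt hv]
  rw [← pow_mul_pow_eq_of_margins_eq h (i := u) (j := v) (k := i + k - u) (l := j + l - v)
    (by lia) (by lia) (by lia)]
  ring

theorem coeff_linear_pow_mul_linear_pow_of_proportional (x₀ x₁ y₀ y₁ : Q) {p a : ℕ} (ha : a ≤ p)
    (b : ℕ) :
    ((Polynomial.C (x₀ * y₀) * Polynomial.X + Polynomial.C (x₁ * y₀)) ^ a *
      (Polynomial.C (x₀ * y₁) * Polynomial.X + Polynomial.C (x₁ * y₁)) ^ (p - a)).coeff b =
        p.choose b * (x₀ ^ b * x₁ ^ (p - b) * (y₀ ^ a * y₁ ^ (p - a))) := by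
  obtain ⟨c, rfl⟩ := Nat.exists_eq_add_of_le ha
  have hfactor : (Polynomial.C (x₀ * y₀) * Polynomial.X + Polynomial.C (x₁ * y₀)) ^ a *
      (Polynomial.C (x₀ * y₁) * Polynomial.X + Polynomial.C (x₁ * y₁)) ^ c =
      Polynomial.C (y₀ ^ a * y₁ ^ c) *
        (Polynomial.C x₀ * Polynomial.X + Polynomial.C x₁) ^ (a + c) := by
    simp only [map_mul, map_pow, mul_right_comm, ← add_mul, mul_pow, pow_add]
    ring
  rw [Nat.add_sub_cancel_left, hfactor, Polynomial.coeff_C_mul, coeff_C_mul_X_add_C_pow]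
  ring

end LinearForms

section HomogeneousCoefficients

variable {σ R : Type*} [CommSemiring R] {P P' : (MvPolynomial σ R)[X]} {m n : ℕ}

theorem isHomogeneous_coeff_mul (hP : ∀ i, (P.coeff i).IsHomogeneous m)
    (hP' : ∀ i, (P'.coeff i).IsHomogeneous n) (i : ℕ) :
    ((P * P').coeff i).IsHomogeneous (m + n) := by
  rw [Polynomial.coeff_mul]
  exact .sum _ _ _ fun _ _ => (hP _).mul (hP' _)

theorem isHomogeneous_coeff_pow (hP : ∀ i, (P.coeff i).IsHomogeneous m) (n i : ℕ) :
    ((P ^ n).coeff i).IsHomogeneous (n * m) := by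
  induction n generalizing i with
  | zero =>
    rw [pow_zero, Polynomial.coeff_one, zero_mul]
    split_ifs
    exacts [isHomogeneous_one σ R, isHomogeneous_zero σ R 0]
  | succ n ih =>
    rw [pow_succ, Nat.succ_mul]
    exact isHomogeneous_coeff_mul ih hP i

theorem isHomogeneous_coeff_C_X_mul_X_add_C_X (u v : σ) (i : ℕ) :
    ((Polynomial.C (X u : MvPolynomial σ R) * Polynomial.X + Polynomial.C (X v)).coeff
      i).IsHomogeneous 1 := by
  rcases i with _ | _ | i
  · simpa using isHomogeneous_X R v
  · simpa [Polynomial.coeff_C] using isHomogeneous_X R u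
  · simpa [Polynomial.coeff_C, Polynomial.coeff_X] using isHomogeneous_zero σ R 1

end HomogeneousCoefficients

theorem isHomogeneous_detPoly : detPoly.IsHomogeneous 2 :=
  ((isHomogeneous_X ℂ _).mul (isHomogeneous_X ℂ _)).sub
    ((isHomogeneous_X ℂ _).mul (isHomogeneous_X ℂ _))

theorem detPoly_ne_zero : detPoly ≠ 0 := by
  intro h
  have heval := congrArg (eval fun s : Fin 2 × Fin 2 => if s.1 = s.2 then (1 : ℂ) else 0) h
  simp [detPoly] at heval

theorem isHomogeneous_tpoly {p a : ℕ} (ha : a ≤ p) (b : ℕ) : (tpoly p a b).IsHomogeneous p := by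
  have h := isHomogeneous_coeff_mul
    (isHomogeneous_coeff_pow (isHomogeneous_coeff_C_X_mul_X_add_C_X (R := ℂ)
      ((0, 0) : Fin 2 × Fin 2) (1, 0)) a)
    (isHomogeneous_coeff_pow (isHomogeneous_coeff_C_X_mul_X_add_C_X (0, 1) (1, 1)) (p - a)) b
  rwa [mul_one, mul_one, Nat.add_sub_of_le ha] at h

theorem map_tpoly {Q : Type*} [CommSemiring Q] (g : PolyRing →+* Q) (p a b : ℕ) :
    g (tpoly p a b) =
      ((Polynomial.C (g (X (0, 0))) * Polynomial.X + Polynomial.C (g (X (1, 0)))) ^ a *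
        (Polynomial.C (g (X (0, 1))) * Polynomial.X +
          Polynomial.C (g (X (1, 1)))) ^ (p - a)).coeff b := by
  rw [tpoly, ← Polynomial.coeff_map]
  simp only [Polynomial.map_mul, Polynomial.map_pow, Polynomial.map_add, Polynomial.map_C,
    Polynomial.map_X]

/-- The substitution `z_ij = x_i y_j`, dual to the Segre embedding; `x_i` is encoded as the variable
`Sum.inl i` and `y_j` as `Sum.inr j`. It kills the `2 × 2` minors of `(z_ij)`. -/
def segre (ι κ R : Type*) [CommSemiring R] :
    MvPolynomial (ι × κ) R →ₐ[R] MvPolynomial (ι ⊕ κ) R :=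
  aeval fun s => X (Sum.inl s.1) * X (Sum.inr s.2)

@[simp]
theorem segre_X {ι κ R : Type*} [CommSemiring R] (s : ι × κ) :
    segre ι κ R (X s) = X (Sum.inl s.1) * X (Sum.inr s.2) :=
  aeval_X _ s

theorem segre_detPoly : segre (Fin 2) (Fin 2) ℂ detPoly = 0 := by
  simp only [detPoly, map_sub, map_mul, segre_X]
  ring

/-- The exponent of the monomial `x₀ ^ b * x₁ ^ (p - b) * y₀ ^ a * y₁ ^ (p - a)`, of which the Segre
substitution makes `tpoly p a b` a multiple. -/
def segreExponent (p a b : ℕ) : Fin 2 ⊕ Fin 2 →₀ ℕ :=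
  Finsupp.equivFunOnFinite.symm (Sum.elim ![b, p - b] ![a, p - a])

theorem monomial_segreExponent {R : Type*} [CommSemiring R] (p a b : ℕ) :
    (monomial (segreExponent p a b) 1 : MvPolynomial (Fin 2 ⊕ Fin 2) R) =
      X (.inl 0) ^ b * X (.inl 1) ^ (p - b) * (X (.inr 0) ^ a * X (.inr 1) ^ (p - a)) := by
  rw [monomial_eq, Finsupp.prod_fintype _ _ (by simp), Fintype.prod_sum_type]
  simp [segreExponent]

theorem segre_tpoly {p a : ℕ} (ha : a ≤ p) (b : ℕ) :
    segre (Fin 2) (Fin 2) ℂ (tpoly p a b) =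
      (p.choose b : ℂ) • monomial (segreExponent p a b) 1 := by
  have h := map_tpoly (segre (Fin 2) (Fin 2) ℂ).toRingHom p a b
  simp only [AlgHom.toRingHom_eq_coe, RingHom.coe_coe, segre_X] at h
  rw [h, coeff_linear_pow_mul_linear_pow_of_proportional _ _ _ _ ha, monomial_segreExponent,
    smul_eq_C_mul, map_natCast]

/-- The index set of the polynomials `t^l_{n m̲}`: triples `(p, a, b)` with `a, b ≤ p`,
encoding `p = 2l`, `a = l−m`, `b = l−n`. -/
abbrev TIndex := Σ p : ℕ, Fin (p + 1) × Fin (p + 1)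

/-- The polynomials `t^l_{n m̲}` as a single family, that is, the members of `tfam` with `k = 0`. -/
def tcoeff (q : TIndex) : PolyRing := tpoly q.1 q.2.1 q.2.2

theorem tfam_eq : tfam = fun q : TIndex × ℕ => tcoeff q.1 * detPoly ^ q.2 :=
  rfl

theorem choose_ne_zero_of_tIndex (q : TIndex) : (q.1.choose q.2.2 : ℂ) ≠ 0 :=
  Nat.cast_ne_zero.mpr (Nat.choose_pos q.2.2.is_le).ne'

theorem segreExponent_injective :
    Function.Injective fun q : TIndex => segreExponent q.1 q.2.1 q.2.2 := by
  rintro ⟨p, a, b⟩ ⟨p', a', b'⟩ h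
  have hb : (b : ℕ) = b' := congrArg (· (.inl 0)) h
  have hpb : p - b = p' - b' := congrArg (· (.inl 1)) h
  have ha : (a : ℕ) = a' := congrArg (· (.inr 0)) h
  obtain rfl : p = p' := by lia
  obtain rfl := Fin.ext ha
  obtain rfl := Fin.ext hb
  rfl

theorem linearIndependent_segre_tcoeff :
    LinearIndependent ℂ (segre (Fin 2) (Fin 2) ℂ ∘ tcoeff) := by
  convert! ((basisMonomials (Fin 2 ⊕ Fin 2) ℂ).linearIndependent.comp _
    segreExponent_injective).units_smul fun q => Units.mk0 _ (choose_ne_zero_of_tIndex q) using 1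
  funext q
  simp [tcoeff, segre_tpoly q.2.1.is_le, Units.smul_def]

theorem monomial_fin_two_prod_fin_two {R : Type*} [CommSemiring R] (e : Fin 2 × Fin 2 →₀ ℕ) :
    (monomial e 1 : MvPolynomial (Fin 2 × Fin 2) R) =
      X (0, 0) ^ e (0, 0) * X (0, 1) ^ e (0, 1) * X (1, 0) ^ e (1, 0) * X (1, 1) ^ e (1, 1) := by
  rw [monomial_eq, Finsupp.prod_fintype _ _ (by simp), Fintype.prod_prod_type]
  simp [mul_assoc]

theorem degree_eq_column_sums (e : Fin 2 × Fin 2 →₀ ℕ) :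
    e.degree = e (0, 0) + e (1, 0) + (e (0, 1) + e (1, 1)) := by
  rw [Finsupp.degree_eq_sum, Fintype.sum_prod_type_right]
  simp only [Fin.sum_univ_two]

theorem detPoly_dvd_choose_smul_monomial_sub_tpoly (e : Fin 2 × Fin 2 →₀ ℕ) :
    detPoly ∣ (e.degree.choose (e (0, 0) + e (0, 1)) : ℂ) • monomial e 1 -
      tpoly e.degree (e (0, 0) + e (1, 0)) (e (0, 0) + e (0, 1)) := by
  let π := Ideal.Quotient.mk (Ideal.span {detPoly})
  have hπ : π (X (0, 0)) * π (X (1, 1)) = π (X (0, 1)) * π (X (1, 0)) := by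
    rw [← map_mul, ← map_mul, Ideal.Quotient.eq]
    exact Ideal.mem_span_singleton_self _
  rw [← Ideal.mem_span_singleton, ← Ideal.Quotient.eq, eq_comm]
  change π _ = π _
  rw [map_tpoly, degree_eq_column_sums e, Nat.add_sub_cancel_left,
    coeff_linear_pow_mul_linear_pow_of_mul_eq_mul hπ, monomial_fin_two_prod_fin_two, smul_eq_C_mul]
  simp only [map_mul, map_pow, map_natCast]

theorem exists_mem_span_tcoeff_congr_monomial (e : Fin 2 × Fin 2 →₀ ℕ) :
    ∃ s ∈ Submodule.span ℂ (Set.range tcoeff),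
      s.totalDegree ≤ e.degree ∧ detPoly ∣ monomial e 1 - s := by
  have hdeg := degree_eq_column_sums e
  let q : TIndex := ⟨e.degree, ⟨e (0, 0) + e (1, 0), by lia⟩, ⟨e (0, 0) + e (0, 1), by lia⟩⟩
  have hchoose := choose_ne_zero_of_tIndex q
  refine ⟨(q.1.choose q.2.2 : ℂ)⁻¹ • tcoeff q,
    Submodule.smul_mem _ _ (Submodule.subset_span (Set.mem_range_self q)),
    (totalDegree_smul_le _ _).trans (isHomogeneous_tpoly q.2.1.is_le _).totalDegree_le, ?_⟩
  have hdvd : detPoly ∣ (q.1.choose q.2.2 : ℂ) • monomial e 1 - tcoeff q :=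
    detPoly_dvd_choose_smul_monomial_sub_tpoly e
  simpa only [smul_sub, inv_smul_smul₀ hchoose] using
    dvd_smul_of_dvd (q.1.choose q.2.2 : ℂ)⁻¹ hdvd

/-- The polynomials `t^l_{n m̲}(Z)·(det Z)^k` for `l ∈ {0,1/2,1,…}`, `m,n ∈ {−l,…,l}`,
`k ∈ {0,1,2,…}` form a `ℂ`-vector-space basis of `ℂ[z₁₁, z₁₂, z₂₁, z₂₂]`: they are linearly
independent and span the whole ring. -/
theorem stmt18 :
    LinearIndependent ℂ tfam ∧ Submodule.span ℂ (Set.range tfam) = ⊤ := by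
  have hdeg : 0 < detPoly.totalDegree := by
    simp [isHomogeneous_detPoly.totalDegree detPoly_ne_zero]
  have hspan : Submodule.span ℂ (Set.range tcoeff) ≤ Submodule.span ℂ (Set.range tfam) :=
    Submodule.span_mono (Set.range_subset_iff.mpr fun q => ⟨(q, 0), by simp [tfam_eq]⟩)
  constructor
  · rw [tfam_eq]
    exact linearIndependent_mul_pow (segre (Fin 2) (Fin 2) ℂ)
      (IsRegular.of_ne_zero detPoly_ne_zero).left segre_detPoly linearIndependent_segre_tcoeff
  · refine submodule_eq_top_of_monomial_congr hdeg ?_ fun e => ?_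
    · rw [tfam_eq]
      exact fun f hf => mul_mem_span_mul_pow tcoeff detPoly hf
    · obtain ⟨s, hs, hcongr⟩ := exists_mem_span_tcoeff_congr_monomial e
      exact ⟨s, hspan hs, hcongr⟩
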